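/- (Interlacing necessity for finite structure under row completion.) Let R(s) ∈ F(s)^{m×n} have rank r and invariant rational functions η_1/φ_1, …, η_r/φ_r. Suppose W̃(s) ∈ F(s)^{z×n} is such that Q(s) = [R(s); W̃(s)] has rank r + x (0 ≤ x ≤ min{z, n−r}) and invariant rational functions ε_1/ψ_1, …, ε_{r+x}/ψ_{r+x}. Then ε_i(s) | η_i(s) | ε_{i+z}(s) and ψ_{i+z}(s) | φ_i(s) | ψ_i(s) for all 1 ≤ i ≤ r, with the conventions ε_j(s) = 0 and ψ_j(s) = 1 for j > r + x. -/

import Mathlib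

open Finset Polynomial

noncomputable section

open scoped Classical

variable {F : Type*} [Field F]

/-- The natural inclusion of polynomials into rational functions. -/
def ratOf {F : Type*} [Field F] (q : Polynomial F) : RatFunc F :=
  algebraMap (Polynomial F) (RatFunc F) q

/-- A polynomial vector, viewed as a vector of rational functions. -/
def polyVec {F : Type*} [Field F] {ι : Type*} (B : ι → Polynomial F) : ι → RatFunc F :=
  fun j => ratOf (B j)

/-- The degree of a polynomial vector: the maximum of the degrees of its entries. -/
def vecDeg {F : Type*} [Field F] {ι : Type*} [Fintype ι] (B : ι → Polynomial F) : ℕ :=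
  Finset.univ.sup fun j => (B j).natDegree

/-- `B` is a polynomial basis of the subspace `V` of `ι → F(s)`. -/
def IsPolyBasisOf {F : Type*} [Field F] {ι : Type*} [Fintype ι]
    (V : Submodule (RatFunc F) (ι → RatFunc F)) {k : ℕ}
    (B : Fin k → ι → Polynomial F) : Prop :=
  LinearIndependent (RatFunc F) (fun i => polyVec (B i)) ∧
  Submodule.span (RatFunc F) (Set.range fun i => polyVec (B i)) = V

/-- `B` is a minimal (least order) polynomial basis of `V`. -/
def IsMinimalBasisOf {F : Type*} [Field F] {ι : Type*} [Fintype ι]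
    (V : Submodule (RatFunc F) (ι → RatFunc F)) {k : ℕ}
    (B : Fin k → ι → Polynomial F) : Prop :=
  IsPolyBasisOf V B ∧
  ∀ (B' : Fin k → ι → Polynomial F), IsPolyBasisOf V B' →
    ∑ i, vecDeg (B i) ≤ ∑ i, vecDeg (B' i)

/-- The multiset `c` is the multiset of minimal indices of the subspace `V`. -/
def HasMinIndices {F : Type*} [Field F] {ι : Type*} [Fintype ι]
    (V : Submodule (RatFunc F) (ι → RatFunc F)) (c : Multiset ℕ) : Prop :=
  ∃ (k : ℕ) (B : Fin k → ι → Polynomial F), IsMinimalBasisOf V B ∧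
    Multiset.map (fun i => vecDeg (B i)) Finset.univ.val = c

/-- The right null-space of a rational matrix. -/
def rightNull {F : Type*} [Field F] {ιr ιc : Type*} [Fintype ιr] [Fintype ιc]
    (R : Matrix ιr ιc (RatFunc F)) : Submodule (RatFunc F) (ιc → RatFunc F) :=
  LinearMap.ker R.mulVecLin

/-- The left null-space of a rational matrix. -/
def leftNull {F : Type*} [Field F] {ιr ιc : Type*} [Fintype ιr] [Fintype ιc]
    (R : Matrix ιr ιc (RatFunc F)) : Submodule (RatFunc F) (ιr → RatFunc F) :=
  LinearMap.ker R.transpose.mulVecLin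

/-- `c` is the multiset of column minimal indices of `R`. -/
def HasColMinIndices {F : Type*} [Field F] {ιr ιc : Type*} [Fintype ιr] [Fintype ιc]
    (R : Matrix ιr ιc (RatFunc F)) (c : Multiset ℕ) : Prop :=
  HasMinIndices (rightNull R) c

/-- `u` is the multiset of row minimal indices of `R`. -/
def HasRowMinIndices {F : Type*} [Field F] {ιr ιc : Type*} [Fintype ιr] [Fintype ιc]
    (R : Matrix ιr ιc (RatFunc F)) (u : Multiset ℕ) : Prop :=
  HasMinIndices (leftNull R) u

/-- A square polynomial matrix is unimodular if its determinant is a unit (a nonzero constant). -/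
def IsUnimodular {F : Type*} [Field F] {k : Type*} [Fintype k] [DecidableEq k]
    (U : Matrix k k (Polynomial F)) : Prop :=
  IsUnit U.det

/-- The Smith–McMillan diagonal form with invariant rational functions ε_i/ψ_i (1-indexed). -/
def smDiag {F : Type*} [Field F] (m n r : ℕ) (ε ψ : ℕ → Polynomial F) :
    Matrix (Fin m) (Fin n) (RatFunc F) :=
  Matrix.of fun i j =>
    if (i : ℕ) = (j : ℕ) ∧ (i : ℕ) < r then ratOf (ε ((i : ℕ) + 1)) / ratOf (ψ ((i : ℕ) + 1)) else 0

/-- `R` has rank `r` (implicitly) and invariant rational functions ε_1/ψ_1, …, ε_r/ψ_r: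
the ε's and ψ's form monic divisibility chains with each ε_i/ψ_i irreducible, and `R` is
unimodularly equivalent to the Smith–McMillan form. -/
def HasInvRatFns {F : Type*} [Field F] {m n : ℕ} (R : Matrix (Fin m) (Fin n) (RatFunc F))
    (r : ℕ) (ε ψ : ℕ → Polynomial F) : Prop :=
  (∀ i, 1 ≤ i → i ≤ r → (ε i).Monic ∧ (ψ i).Monic ∧ IsCoprime (ε i) (ψ i)) ∧
  (∀ i, 1 ≤ i → i < r → ε i ∣ ε (i + 1) ∧ ψ (i + 1) ∣ ψ i) ∧
  ∃ (U : Matrix (Fin m) (Fin m) (Polynomial F)) (V : Matrix (Fin n) (Fin n) (Polynomial F)),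
    IsUnimodular U ∧ IsUnimodular V ∧
    (U.map ratOf) * R * (V.map ratOf) = smDiag m n r ε ψ

/-- `P` has invariant factors η_1 | … | η_r : it is unimodularly equivalent to its
Smith normal form. -/
def HasInvFactors {F : Type*} [Field F] {m n : ℕ} (P : Matrix (Fin m) (Fin n) (Polynomial F))
    (r : ℕ) (η : ℕ → Polynomial F) : Prop :=
  (∀ i, 1 ≤ i → i ≤ r → (η i).Monic) ∧
  (∀ i, 1 ≤ i → i < r → η i ∣ η (i + 1)) ∧
  ∃ (U : Matrix (Fin m) (Fin m) (Polynomial F)) (V : Matrix (Fin n) (Fin n) (Polynomial F)),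
    IsUnimodular U ∧ IsUnimodular V ∧
    U * P * V = Matrix.of fun (i : Fin m) (j : Fin n) =>
      if (i : ℕ) = (j : ℕ) ∧ (i : ℕ) < r then η ((i : ℕ) + 1) else 0

/-- A rational function is proper if the degree of its numerator is at most that of
its denominator. -/
def IsProper {F : Type*} [Field F] (f : RatFunc F) : Prop :=
  f.num.degree ≤ f.denom.degree

/-- A square rational matrix is biproper if it is proper and has a proper inverse. -/
def IsBiproper {F : Type*} [Field F] {k : Type*} [Fintype k] [DecidableEq k]
    (B : Matrix k k (RatFunc F)) : Prop :=
  (∀ i j, IsProper (B i j)) ∧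
  ∃ C : Matrix k k (RatFunc F), (∀ i j, IsProper (C i j)) ∧ B * C = 1 ∧ C * B = 1

/-- The Smith–McMillan form at infinity `diag(s^{-q_1}, …, s^{-q_r})` padded with zeros. -/
def smInfDiag {F : Type*} [Field F] (m n r : ℕ) (q : ℕ → ℤ) :
    Matrix (Fin m) (Fin n) (RatFunc F) :=
  Matrix.of fun i j =>
    if (i : ℕ) = (j : ℕ) ∧ (i : ℕ) < r then (RatFunc.X : RatFunc F) ^ (-(q ((i : ℕ) + 1))) else 0

/-- `R` has invariant orders at infinity q_1 ≤ … ≤ q_r : it is biproperly equivalent to the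
Smith–McMillan form at infinity. -/
def HasInfOrders {F : Type*} [Field F] {m n : ℕ} (R : Matrix (Fin m) (Fin n) (RatFunc F))
    (r : ℕ) (q : ℕ → ℤ) : Prop :=
  (∀ i, 1 ≤ i → i < r → q i ≤ q (i + 1)) ∧
  ∃ (B₁ : Matrix (Fin m) (Fin m) (RatFunc F)) (B₂ : Matrix (Fin n) (Fin n) (RatFunc F)),
    IsBiproper B₁ ∧ IsBiproper B₂ ∧ B₁ * R * B₂ = smInfDiag m n r q

/-- Stacking a `z × n` block below an `m × n` matrix. -/
def stack {α : Type*} {m z n : ℕ} (R : Matrix (Fin m) (Fin n) α)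
    (W : Matrix (Fin z) (Fin n) α) : Matrix (Fin (m + z)) (Fin n) α :=
  Matrix.of fun i j =>
    if h : (i : ℕ) < m then R ⟨i, h⟩ j
    else W ⟨(i : ℕ) - m, by have := i.isLt; omega⟩ j

/-- The matrix `p(s)·R(s)` obtained by multiplying every entry of `R` by the polynomial `p`. -/
def polySmul {F : Type*} [Field F] {ιr ιc : Type*} (p : Polynomial F)
    (R : Matrix ιr ιc (RatFunc F)) : Matrix ιr ιc (RatFunc F) :=
  Matrix.of fun i j => ratOf p * R i j

/-
Call a matrix over `K ⊇ D` approximable in rank `k` modulo `g` if it is `B + g C` with `rank B ≤ k`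
and `C` over `D`. For a Smith form with diagonal `a 0 ∣ a 1 ∣ ⋯` (divisibility over `D`), the entry
`a k` is the greatest such `g`. It is one, because `a k` divides the later entries. Conversely, if
`diag (a 0, …, a k) = B + g C` with `B` singular, multiply row `j` by the element `p j` of `D` with
`p j * a j = a k`: then `a k / g` is an eigenvalue of the matrix `diag p * C` over `D`, so it lies
in `D` as soon as `D` is integrally closed in `K`. Appending `z` rows raises the rank of `B` by at
most `z`, and dropping them does not raise it, whence the interlacing of the `a k`. Being
irreducible, the fractions divide each other only if their numerators and denominators do.
-/

open scoped Submodule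

section Eigenvalue

variable {D K ι : Type*} [CommRing D] [Fintype ι] [DecidableEq ι]

theorem isIntegral_of_det_scalar_sub_map_eq_zero [CommRing K] [Algebra D K] {M : Matrix ι ι D}
    {t : K} (h : (Matrix.scalar ι t - M.map (algebraMap D K)).det = 0) : IsIntegral D t := by
  refine ⟨M.charpoly, M.charpoly_monic, ?_⟩
  rw [← Polynomial.eval_map, ← Matrix.charpoly_map, Matrix.eval_charpoly, h]

theorem mem_span_of_det_scalar_sub_smul_map_eq_zero [Field K] [Algebra D K]
    [IsIntegrallyClosedIn D K] [Nonempty ι] {M : Matrix ι ι D} {b g : K}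
    (h : (Matrix.scalar ι b - g • M.map (algebraMap D K)).det = 0) : b ∈ D ∙ g := by
  obtain rfl | hg := eq_or_ne g 0
  · have hb : b = 0 := by simpa using h
    rw [hb]
    exact zero_mem _
  · have hscale : Matrix.scalar ι b - g • M.map (algebraMap D K) =
        g • (Matrix.scalar ι (b / g) - M.map (algebraMap D K)) := by
      simp only [smul_sub, Matrix.scalar_apply, ← Matrix.diagonal_smul, Pi.smul_def, smul_eq_mul,
        mul_div_cancel₀ _ hg]
    rw [hscale, Matrix.det_smul, mul_eq_zero, or_iff_right (pow_ne_zero _ hg)] at h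
    obtain ⟨y, hy⟩ := IsIntegrallyClosedIn.algebraMap_eq_of_integral
      (isIntegral_of_det_scalar_sub_map_eq_zero h)
    exact Submodule.mem_span_singleton.2 ⟨y, by rw [Algebra.smul_def, hy, div_mul_cancel₀ _ hg]⟩

end Eigenvalue

section RankApprox

variable {D K ι κ : Type*} [CommRing D] [Field K] [Algebra D K] [Fintype κ] {k : ℕ} {g : K}

/-- `A` agrees with a matrix of rank at most `k` modulo `g` times matrices over `D`. If `D` is
integrally closed in `K`, the diagonal entry of index `k` (counted from `0`) of the Smith form of
`A` is the largest such `g` with respect to divisibility over `D`. -/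
def HasRankApprox (D : Type*) {K ι κ : Type*} [CommRing D] [Field K] [Algebra D K] [Fintype κ]
    (A : Matrix ι κ K) (k : ℕ) (g : K) : Prop :=
  ∃ (B : Matrix ι κ K) (C : Matrix ι κ D), B.rank ≤ k ∧ A = B + g • C.map (algebraMap D K)

namespace HasRankApprox

theorem mul_left {ι' : Type*} [Fintype ι] {A : Matrix ι κ K} (h : HasRankApprox D A k g)
    (U : Matrix ι' ι D) : HasRankApprox D (U.map (algebraMap D K) * A) k g := by
  obtain ⟨B, C, hB, rfl⟩ := h
  refine ⟨U.map (algebraMap D K) * B, U * C, (Matrix.rank_mul_le_right _ _).trans hB, ?_⟩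
  rw [Matrix.mul_add, Matrix.mul_smul, Matrix.map_mul]

theorem mul_right {κ' : Type*} [Fintype κ'] {A : Matrix ι κ K} (h : HasRankApprox D A k g)
    (V : Matrix κ κ' D) : HasRankApprox D (A * V.map (algebraMap D K)) k g := by
  obtain ⟨B, C, hB, rfl⟩ := h
  refine ⟨B * V.map (algebraMap D K), C * V, (Matrix.rank_mul_le_left _ _).trans hB, ?_⟩
  rw [Matrix.add_mul, Matrix.smul_mul, Matrix.map_mul]

theorem submatrix {ι' κ' : Type*} [Fintype κ'] {A : Matrix ι κ K} (h : HasRankApprox D A k g)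
    (e : ι' → ι) (f : κ' → κ) : HasRankApprox D (A.submatrix e f) k g := by
  obtain ⟨B, C, hB, rfl⟩ := h
  exact ⟨B.submatrix e f, C.submatrix e f, (Matrix.rank_submatrix_le B e f).trans hB, rfl⟩

theorem mem_span_of_diagonal [IsIntegrallyClosedIn D K] [DecidableEq κ] {d : κ → K} {b : K}
    (h : HasRankApprox D (Matrix.diagonal d) k g) (hk : k < Fintype.card κ)
    (hd : ∀ i, b ∈ D ∙ d i) : b ∈ D ∙ g := by
  obtain ⟨B, C, hB, hBC⟩ := h
  choose p hp using fun i => Submodule.mem_span_singleton.1 (hd i)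
  have hdet : B.det = 0 := by
    by_contra hne
    exact (hB.trans_lt hk).ne (Matrix.rank_of_det_ne_zero hne)
  have hrows : Matrix.scalar κ b - g • (Matrix.diagonal p * C).map (algebraMap D K) =
      (Matrix.diagonal p).map (algebraMap D K) * B := by
    rw [eq_sub_of_add_eq hBC.symm, Matrix.mul_sub, Matrix.mul_smul, Matrix.map_mul,
      Matrix.diagonal_map (map_zero _), Matrix.diagonal_mul_diagonal]
    simp only [← Algebra.smul_def, hp, Matrix.scalar_apply]
  have : Nonempty κ := Fintype.card_pos_iff.1 (Nat.zero_lt_of_lt hk)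
  refine mem_span_of_det_scalar_sub_smul_map_eq_zero (M := Matrix.diagonal p * C) ?_
  rw [hrows, Matrix.det_mul, hdet, mul_zero]

end HasRankApprox

end RankApprox

section Stack

variable {D K : Type*} [CommRing D] [Field K] [Algebra D K] {m n z k : ℕ} {g : K}
  {R : Matrix (Fin m) (Fin n) K} {W : Matrix (Fin z) (Fin n) K}

theorem stack_submatrix_castAdd {α : Type*} (R : Matrix (Fin m) (Fin n) α)
    (W : Matrix (Fin z) (Fin n) α) : (stack R W).submatrix (Fin.castAdd z) id = R := by
  ext i j
  simp [stack]

theorem rank_stack_le (R : Matrix (Fin m) (Fin n) K) (W : Matrix (Fin z) (Fin n) K) :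
    (stack R W).rank ≤ R.rank + W.rank := by
  simp only [Matrix.rank_eq_finrank_span_row]
  refine (Submodule.finrank_mono (Submodule.span_le.2 ?_)).trans
    (Submodule.finrank_add_le_finrank_add_finrank _ _)
  rintro _ ⟨i, rfl⟩
  induction i using Fin.addCases with
  | left i =>
    refine Submodule.mem_sup_left (Submodule.subset_span ⟨i, ?_⟩)
    ext j
    simp [stack]
  | right i =>
    refine Submodule.mem_sup_right (Submodule.subset_span ⟨i, ?_⟩)
    ext j
    simp [stack]

theorem HasRankApprox.stack_of_top (h : HasRankApprox D R k g) (W : Matrix (Fin z) (Fin n) K) :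
    HasRankApprox D (stack R W) (k + z) g := by
  obtain ⟨B, C, hB, rfl⟩ := h
  refine ⟨stack B W, stack C 0,
    (rank_stack_le B W).trans (add_le_add hB (Matrix.rank_le_height W)), ?_⟩
  ext i j
  by_cases hi : (i : ℕ) < m <;> simp [stack, hi]

theorem HasRankApprox.top_of_stack (h : HasRankApprox D (stack R W) k g) :
    HasRankApprox D R k g := by
  simpa only [stack_submatrix_castAdd] using h.submatrix (Fin.castAdd z) id

end Stack

section SmithForm

variable {D K : Type*} [CommRing D] [Field K] [Algebra D K] {m n z k : ℕ} {g : K} {a b : ℕ → K}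

/-- The `m × n` matrix with diagonal entries `a 0, a 1, …` and zeros elsewhere. -/
def rectDiagonal {α : Type*} [Zero α] (m n : ℕ) (a : ℕ → α) : Matrix (Fin m) (Fin n) α :=
  Matrix.of fun i j => if (i : ℕ) = j then a i else 0

theorem rank_rectDiagonal_le (ha : ∀ i, k ≤ i → a i = 0) : (rectDiagonal m n a).rank ≤ k := by
  refine (Matrix.rank_le_card_of_support_subset _ {i : Fin m | (i : ℕ) < k} ?_).trans ?_
  · refine Function.support_subset_iff'.2 fun i hi => ?_
    have hi' : k ≤ i := by simpa using hi
    ext j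
    simp [Matrix.row, rectDiagonal, ha i hi']
  · simp [Fin.card_filter_val_lt]

theorem hasRankApprox_rectDiagonal (ha : ∀ i, k ≤ i → a i ∈ D ∙ a k) :
    HasRankApprox D (rectDiagonal m n a) k (a k) := by
  choose! p hp using fun i hi => Submodule.mem_span_singleton.1 (ha i hi)
  refine ⟨rectDiagonal m n fun i => if i < k then a i else 0,
    rectDiagonal m n fun i => if i < k then 0 else p i,
    rank_rectDiagonal_le fun i hi => if_neg hi.not_gt, ?_⟩
  ext i j
  by_cases hij : (i : ℕ) = j <;> by_cases hk : (i : ℕ) < k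
  · simp [rectDiagonal, ← hij, hk]
  · simp [rectDiagonal, ← hij, hk, ← hp i (not_lt.1 hk), Algebra.smul_def, mul_comm]
  all_goals simp [rectDiagonal, hij]

/-- `A` is equivalent over `D` to the rectangular diagonal matrix with entries `a 0 ∣ a 1 ∣ ⋯`.
Divisibility over `D` of elements of `K` is the reverse inclusion of the cyclic `D`-submodules
they span. The `a i` may vanish from some index on, so no rank is recorded; those with
`min m n ≤ i` do not occur in the matrix. -/
structure HasSmithForm (D : Type*) {K : Type*} [CommRing D] [Field K] [Algebra D K] {m n : ℕ}
    (A : Matrix (Fin m) (Fin n) K) (a : ℕ → K) : Prop where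
  antitone : Antitone fun i => D ∙ a i
  exists_equiv : ∃ (U : Matrix (Fin m) (Fin m) D) (V : Matrix (Fin n) (Fin n) D),
    IsUnit U.det ∧ IsUnit V.det ∧
      U.map (algebraMap D K) * A * V.map (algebraMap D K) = rectDiagonal m n a

namespace HasSmithForm

theorem mem_span {A : Matrix (Fin m) (Fin n) K} (h : HasSmithForm D A a) {i j : ℕ} (hij : i ≤ j) :
    a j ∈ D ∙ a i :=
  h.antitone hij (Submodule.mem_span_singleton_self _)

theorem hasRankApprox {A : Matrix (Fin m) (Fin n) K} (h : HasSmithForm D A a) (k : ℕ) :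
    HasRankApprox D A k (a k) := by
  obtain ⟨U, V, hU, hV, hUV⟩ := h.exists_equiv
  have hA : A = U⁻¹.map (algebraMap D K) * rectDiagonal m n a * V⁻¹.map (algebraMap D K) := by
    have hU' : U⁻¹.map (algebraMap D K) * U.map (algebraMap D K) = 1 := by
      rw [← Matrix.map_mul, Matrix.nonsing_inv_mul U hU,
        Matrix.map_one _ (map_zero _) (map_one _)]
    have hV' : V.map (algebraMap D K) * V⁻¹.map (algebraMap D K) = 1 := by
      rw [← Matrix.map_mul, Matrix.mul_nonsing_inv V hV,
        Matrix.map_one _ (map_zero _) (map_one _)]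
    rw [← hUV, Matrix.mul_assoc, Matrix.mul_assoc, hV', Matrix.mul_one, ← Matrix.mul_assoc, hU',
      Matrix.one_mul]
  rw [hA]
  exact ((hasRankApprox_rectDiagonal fun i hi => h.mem_span hi).mul_left U⁻¹).mul_right V⁻¹

theorem mem_span_of_hasRankApprox [IsIntegrallyClosedIn D K] {A : Matrix (Fin m) (Fin n) K}
    (h : HasSmithForm D A a) (hm : k < m) (hn : k < n) (hg : HasRankApprox D A k g) :
    a k ∈ D ∙ g := by
  obtain ⟨U, V, -, -, hUV⟩ := h.exists_equiv
  have hdiag : (rectDiagonal m n a).submatrix (Fin.castLE hm) (Fin.castLE hn) =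
      Matrix.diagonal fun i : Fin (k + 1) => a i := by
    ext i j
    simp [rectDiagonal, Matrix.diagonal_apply, Fin.ext_iff]
  have hg' := ((hg.mul_left U).mul_right V).submatrix (Fin.castLE hm) (Fin.castLE hn)
  rw [hUV, hdiag] at hg'
  exact hg'.mem_span_of_diagonal (by simp) fun i => h.mem_span (Nat.le_of_lt_succ i.isLt)

variable [IsIntegrallyClosedIn D K] {R : Matrix (Fin m) (Fin n) K} {W : Matrix (Fin z) (Fin n) K}

theorem mem_span_stack (hR : HasSmithForm D R a) (hQ : HasSmithForm D (stack R W) b)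
    (hm : k < m) (hn : k < n) : a k ∈ D ∙ b k :=
  hR.mem_span_of_hasRankApprox hm hn (hQ.hasRankApprox k).top_of_stack

theorem stack_mem_span (hR : HasSmithForm D R a) (hQ : HasSmithForm D (stack R W) b)
    (hm : k < m) (hn : k + z < n) : b (k + z) ∈ D ∙ a k :=
  hQ.mem_span_of_hasRankApprox (by omega) hn ((hR.hasRankApprox k).stack_of_top W)

end HasSmithForm

end SmithForm

section InvFractions

variable {D K : Type*} [CommRing D] [Field K] [Algebra D K] {m n r s : ℕ} {η φ ε ψ : ℕ → D}

/-- The fraction `ε_(i+1) / ψ_(i+1)` for `i < r`, followed by zeros: the diagonal of a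
Smith–McMillan form, indexed from `0` while `ε` and `ψ` are indexed from `1`. -/
def invFraction (K : Type*) {D : Type*} [CommRing D] [Field K] [Algebra D K] (r : ℕ)
    (ε ψ : ℕ → D) (i : ℕ) : K :=
  if i < r then algebraMap D K (ε (i + 1)) / algebraMap D K (ψ (i + 1)) else 0

theorem invFraction_of_lt {i : ℕ} (hi : i < r) :
    invFraction K r ε ψ i = algebraMap D K (ε (i + 1)) / algebraMap D K (ψ (i + 1)) :=
  if_pos hi

theorem invFraction_of_le {i : ℕ} (hi : r ≤ i) : invFraction K r ε ψ i = 0 :=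
  if_neg hi.not_gt

/-- `A` has the Smith–McMillan form with irreducible fractions `ε_1/ψ_1, …, ε_r/ψ_r` over `D`;
this is `HasInvRatFns` with an arbitrary ring in place of the polynomials. Numerators may vanish,
so `r` bounds the rank of `A` and is only required to be at most the number of diagonal places. -/
structure HasInvFractions (D : Type*) {K : Type*} [CommRing D] [Field K] [Algebra D K] {m n : ℕ}
    (A : Matrix (Fin m) (Fin n) K) (r : ℕ) (ε ψ : ℕ → D) : Prop where
  le_height : r ≤ m
  le_width : r ≤ n
  denom_ne_zero : ∀ i, 1 ≤ i → i ≤ r → ψ i ≠ 0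
  isCoprime : ∀ i, 1 ≤ i → i ≤ r → IsCoprime (ε i) (ψ i)
  num_dvd : ∀ i, 1 ≤ i → i < r → ε i ∣ ε (i + 1)
  denom_dvd : ∀ i, 1 ≤ i → i < r → ψ (i + 1) ∣ ψ i
  exists_equiv : ∃ (U : Matrix (Fin m) (Fin m) D) (V : Matrix (Fin n) (Fin n) D),
    IsUnit U.det ∧ IsUnit V.det ∧
      U.map (algebraMap D K) * A * V.map (algebraMap D K) =
        rectDiagonal m n (invFraction K r ε ψ)

theorem div_mem_span_div {a b c d : D} (hb : algebraMap D K b ≠ 0) (hac : a ∣ c) (hdb : d ∣ b) :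
    algebraMap D K c / algebraMap D K d ∈ D ∙ (algebraMap D K a / algebraMap D K b) := by
  obtain ⟨p, rfl⟩ := hac
  obtain ⟨q, rfl⟩ := hdb
  rw [map_mul] at hb
  have hd := left_ne_zero_of_mul hb
  have hq := right_ne_zero_of_mul hb
  refine Submodule.mem_span_singleton.2 ⟨p * q, ?_⟩
  simp only [Algebra.smul_def, map_mul]
  field_simp

variable [FaithfulSMul D K]

theorem dvd_and_dvd_of_div_mem_span_div {a b c d : D} (hb : b ≠ 0) (hd : d ≠ 0)
    (hab : IsCoprime a b) (hcd : IsCoprime c d)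
    (h : algebraMap D K c / algebraMap D K d ∈ D ∙ (algebraMap D K a / algebraMap D K b)) :
    a ∣ c ∧ d ∣ b := by
  have hinj := FaithfulSMul.algebraMap_injective D K
  obtain ⟨p, hp⟩ := Submodule.mem_span_singleton.1 h
  rw [Algebra.smul_def, mul_div_assoc', div_eq_div_iff ((map_ne_zero_iff _ hinj).2 hb)
    ((map_ne_zero_iff _ hinj).2 hd)] at hp
  have hcross : p * a * d = c * b := hinj (by simpa only [map_mul] using hp)
  exact ⟨hab.dvd_of_dvd_mul_right ⟨p * d, by rw [← hcross]; ring⟩,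
    hcd.symm.dvd_of_dvd_mul_left ⟨p * a, by rw [← hcross]; ring⟩⟩

namespace HasInvFractions

theorem hasSmithForm {A : Matrix (Fin m) (Fin n) K} (h : HasInvFractions D A r ε ψ) :
    HasSmithForm D A (invFraction K r ε ψ) := by
  refine ⟨antitone_nat_of_succ_le fun i => ?_, h.exists_equiv⟩
  rw [Submodule.span_singleton_le_iff_mem]
  by_cases hi : i + 1 < r
  · have hψ : algebraMap D K (ψ (i + 1)) ≠ 0 :=
      (map_ne_zero_iff _ (FaithfulSMul.algebraMap_injective D K)).2
        (h.denom_ne_zero (i + 1) (by omega) (by omega))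
    rw [invFraction_of_lt hi, invFraction_of_lt (by omega)]
    exact div_mem_span_div hψ (h.num_dvd (i + 1) (by omega) hi) (h.denom_dvd (i + 1) (by omega) hi)
  · rw [invFraction_of_le (not_lt.1 hi)]
    exact zero_mem _

theorem dvd_and_dvd_of_mem_span {m' n' : ℕ} {A : Matrix (Fin m) (Fin n) K}
    {B : Matrix (Fin m') (Fin n') K} (hA : HasInvFractions D A r η φ)
    (hB : HasInvFractions D B s ε ψ) {i j : ℕ} (hi : i < r) (hj : j < s)
    (h : invFraction K s ε ψ j ∈ D ∙ invFraction K r η φ i) :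
    η (i + 1) ∣ ε (j + 1) ∧ ψ (j + 1) ∣ φ (i + 1) := by
  rw [invFraction_of_lt hj, invFraction_of_lt hi] at h
  exact dvd_and_dvd_of_div_mem_span_div (hA.denom_ne_zero _ (by omega) hi)
    (hB.denom_ne_zero _ (by omega) hj) (hA.isCoprime _ (by omega) hi)
    (hB.isCoprime _ (by omega) hj) h

end HasInvFractions

end InvFractions

theorem HasInvRatFns.hasInvFractions {F : Type*} [Field F] {m n r : ℕ}
    {R : Matrix (Fin m) (Fin n) (RatFunc F)} {ε ψ : ℕ → F[X]} (h : HasInvRatFns R r ε ψ)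
    (hr : R.rank = r) : HasInvFractions F[X] R r ε ψ := by
  obtain ⟨hirr, hdvd, U, V, hU, hV, hUV⟩ := h
  refine ⟨hr ▸ R.rank_le_height, hr ▸ R.rank_le_width, fun i hi hir => (hirr i hi hir).2.1.ne_zero,
    fun i hi hir => (hirr i hi hir).2.2, fun i hi hir => (hdvd i hi hir).1,
    fun i hi hir => (hdvd i hi hir).2, U, V, hU, hV, hUV.trans ?_⟩
  ext i j
  exact ite_and _ _ _ _

theorem stmt17_general {D K : Type*} [CommRing D] [Field K] [Algebra D K]
    [IsIntegrallyClosedIn D K] {m n r s z : ℕ} (hrs : r ≤ s) {R : Matrix (Fin m) (Fin n) K}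
    {η φ : ℕ → D} (hR : HasInvFractions D R r η φ) {W : Matrix (Fin z) (Fin n) K}
    {ε ψ : ℕ → D} (hQ : HasInvFractions D (stack R W) s ε ψ) :
    ∀ i, 1 ≤ i → i ≤ r →
      ε i ∣ η i ∧
      η i ∣ (if i + z ≤ s then ε (i + z) else 0) ∧
      (if i + z ≤ s then ψ (i + z) else 1) ∣ φ i ∧
      φ i ∣ ψ i := by
  intro i hi hir
  obtain ⟨k, rfl⟩ := Nat.exists_eq_add_of_le' hi
  have : FaithfulSMul D K := (faithfulSMul_iff_algebraMap_injective D K).2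
    (IsIntegralClosure.algebraMap_injective D D K)
  have hm : k < m := hir.trans hR.le_height
  obtain ⟨hεη, hφψ⟩ := hQ.dvd_and_dvd_of_mem_span hR (hir.trans hrs) hir
    (hR.hasSmithForm.mem_span_stack hQ.hasSmithForm hm (hir.trans hR.le_width))
  refine ⟨hεη, ?_⟩
  rw [add_right_comm]
  split_ifs with hz
  · obtain ⟨hηε, hψφ⟩ := hR.dvd_and_dvd_of_mem_span hQ hir hz
      (hR.hasSmithForm.stack_mem_span hQ.hasSmithForm hm (hz.trans hQ.le_width))
    exact ⟨hηε, hψφ, hφψ⟩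
  · exact ⟨dvd_zero _, one_dvd _, hφψ⟩

/-- Interlacing necessity for the finite structure under row completion:
ε_i | η_i | ε_{i+z} and ψ_{i+z} | φ_i | ψ_i for 1 ≤ i ≤ r, with the conventions
ε_j = 0 and ψ_j = 1 for j > r + x. -/
theorem stmt17 {F : Type*} [Field F] {m n r z x : ℕ} (hxz : x ≤ z) (hxnr : x ≤ n - r)
    (R : Matrix (Fin m) (Fin n) (RatFunc F)) (hrank : R.rank = r)
    (η φ : ℕ → Polynomial F) (hR : HasInvRatFns R r η φ)
    (W : Matrix (Fin z) (Fin n) (RatFunc F))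
    (hQrank : (stack R W).rank = r + x)
    (ε ψ : ℕ → Polynomial F) (hQ : HasInvRatFns (stack R W) (r + x) ε ψ) :
    ∀ i, 1 ≤ i → i ≤ r →
      ε i ∣ η i ∧
      η i ∣ (if i + z ≤ r + x then ε (i + z) else 0) ∧
      (if i + z ≤ r + x then ψ (i + z) else 1) ∣ φ i ∧
      φ i ∣ ψ i := by
  have := (isIntegrallyClosed_iff_isIntegrallyClosedIn (R := F[X]) (RatFunc F)).1 inferInstance
  exact stmt17_general (Nat.le_add_right r x) (hR.hasInvFractions hrank) (hQ.hasInvFractions hQrank)
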